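/- Let κ be a regular uncountable cardinal, λ a cardinal, T a tree of height κ, and ⟨b_α : α < κ⟩ an injective enumeration of all cofinal branches of T. For each α < κ let s_α be the <_T-least element of b_α \ ⋃_{β<α} b_β, and let T* = {t ∈ T : there is no α < κ with s_α <_T t and t ∈ b_α}. Suppose F : T* → λ is such that whenever x ≠ y are in T* and F(x) = F(y), then x and y are <_T-incomparable. Then there exists F′ : T → λ with F′ ↾ T* = F such that F′ specializes T: for all x, y, z ∈ T, if x ≤_T y, x ≤_T z and F′(x) = F′(y) = F′(z), then y ≤_T z or z ≤_T y. -/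

import Mathlib

open Cardinal

/-- A partial order is a tree order if the set of strict predecessors of every
element is well-ordered by the induced order. -/
def IsTreeOrder (T : Type) [PartialOrder T] : Prop :=
  ∀ t : T, IsWellOrder {s : T // s < t} (· < ·)

/-- The height of a node: the order type of its set of strict predecessors. -/
noncomputable def nodeHeight {T : Type} [PartialOrder T] (htree : IsTreeOrder T) (t : T) :
    Ordinal :=
  @Ordinal.type {s : T // s < t} (· < ·) (htree t)

/-- `T` has height `κ`: every node has height `< κ`, and every ordinal `< κ` is
the height of some node. -/
def HasTreeHeight {T : Type} [PartialOrder T] (htree : IsTreeOrder T) (κ : Cardinal) : Prop :=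
  (∀ t : T, nodeHeight htree t < κ.ord) ∧ ∀ o < κ.ord, ∃ t : T, nodeHeight htree t = o

/-- A cofinal branch: a downward-closed maximal chain containing nodes of
arbitrarily large height below `κ`. -/
def IsCofBranch {T : Type} [PartialOrder T] (htree : IsTreeOrder T) (κ : Cardinal)
    (b : Set T) : Prop :=
  IsMaxChain (· ≤ ·) b ∧ (∀ x ∈ b, ∀ y, y ≤ x → y ∈ b) ∧
    ∀ o < κ.ord, ∃ x ∈ b, o ≤ nodeHeight htree x

/-! Send each node `t` to a node `stem t ≤ t` of `T*`: to `s α` if `s α < t` and `t ∈ b α`, and to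
`t` itself if there is no such `α`. Nodes with the same stem are comparable, because `s` is
injective and two nodes sent to `s α` lie on the branch `b α`. If `x ≤ y`, then the stems of `x`
and `y` both lie below `y`, so they are comparable, and `F` can only agree on them when they are
equal. Hence `F ∘ stem` specializes `T`. -/

theorem IsTreeOrder.isChain_Iio {T : Type} [PartialOrder T] (htree : IsTreeOrder T) (t : T) :
    IsChain (· ≤ ·) (Set.Iio t) := by
  intro a ha b hb _
  have := htree t
  rcases trichotomous_of (fun u v : {s : T // s < t} => u < v) ⟨a, ha⟩ ⟨b, hb⟩
    with hab | hab | hba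
  · exact Or.inl (Subtype.mk_lt_mk.mp hab).le
  · exact Or.inl (Subtype.mk.inj hab).le
  · exact Or.inr (Subtype.mk_lt_mk.mp hba).le

theorem IsTreeOrder.isChain_Iic {T : Type} [PartialOrder T] (htree : IsTreeOrder T) (t : T) :
    IsChain (· ≤ ·) (Set.Iic t) := by
  rw [← Set.Iio_insert]
  exact (htree.isChain_Iio t).insert fun _ ha _ => Or.inr (le_of_lt ha)

section Colouring

variable {T Λ : Type*}

/-- A colouring that takes distinct values on distinct comparable elements, that is, a colouring
that is injective on every chain. -/
def IsInjectiveOnChains [LE T] (F : T → Λ) : Prop :=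
  ∀ ⦃x y : T⦄, x ≤ y → F x = F y → x = y

/-- A specializing function: above each `x`, the elements with the colour of `x` are pairwise
comparable. -/
def IsSpecializing [LE T] (F : T → Λ) : Prop :=
  ∀ x y z : T, x ≤ y → x ≤ z → F x = F y → F x = F z → y ≤ z ∨ z ≤ y

theorem IsInjectiveOnChains.eq_of_le_of_le [Preorder T] {S : Set T} {F : S → Λ}
    (hF : IsInjectiveOnChains F) {t : T} (ht : IsChain (· ≤ ·) (Set.Iic t)) {x y : S}
    (hx : (x : T) ≤ t) (hy : (y : T) ≤ t) (hxy : F x = F y) : x = y :=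
  (ht.total hx hy).elim (fun hle => hF hle hxy) (fun hle => (hF hle hxy.symm).symm)

theorem IsInjectiveOnChains.isSpecializing_comp [Preorder T] {S : Set T} {F : S → Λ}
    (hF : IsInjectiveOnChains F) (hT : ∀ t : T, IsChain (· ≤ ·) (Set.Iic t)) {r : T → S}
    (hr_le : ∀ t, (r t : T) ≤ t) (hr_fiber : ∀ y z, r y = r z → y ≤ z ∨ z ≤ y) :
    IsSpecializing (F ∘ r) := by
  intro x y z hxy hxz hFxy hFxz
  have hr_xy : r x = r y := hF.eq_of_le_of_le (hT y) ((hr_le x).trans hxy) (hr_le y) hFxy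
  have hr_xz : r x = r z := hF.eq_of_le_of_le (hT z) ((hr_le x).trans hxz) (hr_le z) hFxz
  exact hr_fiber y z (hr_xy.symm.trans hr_xz)

end Colouring

section Stem

variable {T ι : Type*} {b : ι → Set T} {s : ι → T}

/-- The set `T*` of the paper: the nodes `t` that do not lie on any branch `b α` strictly above
its chosen node `s α`. -/
def trunk [LT T] (b : ι → Set T) (s : ι → T) : Set T :=
  {t | ¬ ∃ α, s α < t ∧ t ∈ b α}

open Classical in
/-- The node of `T*` from which `t` inherits its colour: `t` itself if `t ∈ T*`, and otherwise
`s α` for some `α` with `s α < t ∈ b α`. In the setting of `specializing_function_extension` this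
`α` is unique, so the choice made here is immaterial. -/
noncomputable def stem [LT T] (b : ι → Set T) (s : ι → T) (t : T) : T :=
  if h : ∃ α, s α < t ∧ t ∈ b α then s h.choose else t

theorem stem_of_mem_trunk [LT T] {t : T} (ht : t ∈ trunk b s) : stem b s t = t :=
  dif_neg ht

theorem exists_stem_eq_of_notMem_trunk [LT T] {t : T} (ht : t ∉ trunk b s) :
    ∃ α, stem b s t = s α ∧ s α < t ∧ t ∈ b α :=
  have h : ∃ α, s α < t ∧ t ∈ b α := not_not.mp ht
  ⟨h.choose, dif_pos h, h.choose_spec⟩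

theorem stem_le [Preorder T] (t : T) : stem b s t ≤ t := by
  by_cases ht : t ∈ trunk b s
  · exact (stem_of_mem_trunk ht).le
  · obtain ⟨α, hstem, hlt, -⟩ := exists_stem_eq_of_notMem_trunk ht
    exact hstem.trans_le hlt.le

theorem stem_mem_trunk [LT T] (hs : ∀ α, s α ∈ trunk b s) (t : T) :
    stem b s t ∈ trunk b s := by
  by_cases ht : t ∈ trunk b s
  · rwa [stem_of_mem_trunk ht]
  · obtain ⟨α, hstem, -⟩ := exists_stem_eq_of_notMem_trunk ht
    exact hstem ▸ hs α

theorem le_or_le_of_stem_eq [Preorder T] (hchain : ∀ α, IsChain (· ≤ ·) (b α))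
    (hs : Function.Injective s) {y z : T} (h : stem b s y = stem b s z) : y ≤ z ∨ z ≤ y := by
  by_cases hy : y ∈ trunk b s
  · left
    calc y = stem b s z := (stem_of_mem_trunk hy).symm.trans h
      _ ≤ z := stem_le z
  by_cases hz : z ∈ trunk b s
  · right
    calc z = stem b s y := (stem_of_mem_trunk hz).symm.trans h.symm
      _ ≤ y := stem_le y
  obtain ⟨α, hα, -, hyα⟩ := exists_stem_eq_of_notMem_trunk hy
  obtain ⟨β, hβ, -, hzβ⟩ := exists_stem_eq_of_notMem_trunk hz
  obtain rfl : α = β := hs (hα.symm.trans (h.trans hβ))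
  exact (hchain α).total hyα hzβ

end Stem

section NewNodeSelection

/-- A choice `s` of one element from each difference `b α \ ⋃_{β < α} b β`, such as the paper's
choice of the least element. -/
structure IsNewNodeSelection {T ι : Type*} [LT ι] (b : ι → Set T) (s : ι → T) : Prop where
  mem : ∀ α, s α ∈ b α
  notMem_of_lt : ∀ α, ∀ β < α, s α ∉ b β

variable {T ι Λ : Type*} [Preorder T] [LinearOrder ι] {b : ι → Set T} {s : ι → T}

namespace IsNewNodeSelection

theorem index_le (hs : IsNewNodeSelection b s) (hlower : ∀ α, IsLowerSet (b α)) {α β : ι} {t : T}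
    (hst : s β ≤ t) (ht : t ∈ b α) : β ≤ α :=
  le_of_not_gt fun hlt => hs.notMem_of_lt β α hlt (hlower α hst ht)

theorem index_eq (hs : IsNewNodeSelection b s) (hlower : ∀ α, IsLowerSet (b α)) {α β : ι}
    (hle : s β ≤ s α) (hα : s α ∈ b β) : β = α :=
  le_antisymm (hs.index_le hlower hle (hs.mem α)) (hs.index_le hlower le_rfl hα)

theorem injective (hs : IsNewNodeSelection b s) (hlower : ∀ α, IsLowerSet (b α)) :
    Function.Injective s :=
  fun α _ h => hs.index_eq hlower h.le (h ▸ hs.mem α)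

theorem mem_trunk (hs : IsNewNodeSelection b s) (hlower : ∀ α, IsLowerSet (b α)) (α : ι) :
    s α ∈ trunk b s := by
  rintro ⟨β, hlt, hα⟩
  obtain rfl : β = α := hs.index_eq hlower hlt.le hα
  exact lt_irrefl _ hlt

end IsNewNodeSelection

theorem specializing_function_extension_general (hT : ∀ t : T, IsChain (· ≤ ·) (Set.Iic t))
    (hchain : ∀ α, IsChain (· ≤ ·) (b α)) (hlower : ∀ α, IsLowerSet (b α))
    (hs : IsNewNodeSelection b s) {F : trunk b s → Λ} (hF : IsInjectiveOnChains F) :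
    ∃ F' : T → Λ, (∀ x : trunk b s, F' x = F x) ∧ IsSpecializing F' := by
  let r : T → trunk b s := fun t => ⟨stem b s t, stem_mem_trunk (hs.mem_trunk hlower) t⟩
  have hr_fiber : ∀ y z, r y = r z → y ≤ z ∨ z ≤ y := fun _ _ h =>
    le_or_le_of_stem_eq hchain (hs.injective hlower) (congrArg Subtype.val h)
  have hr_retract : ∀ x : trunk b s, r x = x := fun x => Subtype.ext (stem_of_mem_trunk x.2)
  exact ⟨F ∘ r, fun x => congrArg F (hr_retract x), hF.isSpecializing_comp hT stem_le hr_fiber⟩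

end NewNodeSelection

/-- Lemma 4.3.  If `F : T* → λ` takes equal values only on
`<`-incomparable nodes, then `F` extends to a specializing function
`F' : T → λ`: equal `F'`-values on `x ≤ y` and `x ≤ z` force `y, z` to be
comparable. -/
theorem specializing_function_extension (T : Type) [PartialOrder T]
    (htree : IsTreeOrder T) (κ : Cardinal) (lam : Cardinal)
    (hreg : κ.IsRegular) (hunc : aleph0 < κ)
    (hht : HasTreeHeight htree κ)
    (bseq : κ.ord.ToType → Set T)
    (hinj : Function.Injective bseq)
    (hbr : ∀ α, IsCofBranch htree κ (bseq α))
    (hall : ∀ c : Set T, IsCofBranch htree κ c → ∃ α, bseq α = c)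
    (s : κ.ord.ToType → T)
    (hs₁ : ∀ α, s α ∈ bseq α)
    (hs₂ : ∀ α, ∀ β < α, s α ∉ bseq β)
    (hs₃ : ∀ α, ∀ y ∈ bseq α, (∀ β < α, y ∉ bseq β) → s α ≤ y)
    (F : {t : T // t ∈ {t : T | ¬ ∃ α, s α < t ∧ t ∈ bseq α}} → lam.ord.ToType)
    (hF : ∀ x y : {t : T // t ∈ {t : T | ¬ ∃ α, s α < t ∧ t ∈ bseq α}},
      x ≠ y → F x = F y → ¬ x.1 ≤ y.1 ∧ ¬ y.1 ≤ x.1) :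
    ∃ F' : T → lam.ord.ToType,
      (∀ x : {t : T // t ∈ {t : T | ¬ ∃ α, s α < t ∧ t ∈ bseq α}}, F' x.1 = F x) ∧
      (∀ x y z : T, x ≤ y → x ≤ z → F' x = F' y → F' x = F' z → (y ≤ z ∨ z ≤ y)) :=
  specializing_function_extension_general htree.isChain_Iic (fun α => (hbr α).1.1)
    (fun α _ _ hle hx => (hbr α).2.1 _ hx _ hle) ⟨hs₁, hs₂⟩
    fun x y hxy hFxy => by_contra fun hne => (hF x y hne hFxy).1 hxy
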